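/- arXiv:1510.03381 — 4 statements merged into one kernel-verified Lean document; each statement's English description precedes it below -/
import Mathlib

section
/- If a finite simple graph G has an I,F-partition, then its star chromatic number satisfies χ_s(G) ≤ 4. -/
open SimpleGraph

noncomputable def edgeCount {V : Type*} (G : SimpleGraph V) : ℕ := Nat.card G.edgeSet

noncomputable def deg {V : Type*} (G : SimpleGraph V) (v : V) : ℕ := Nat.card (G.neighborSet v)

def TwoIndependent {V : Type*} (G : SimpleGraph V) (S : Set V) : Prop :=
  ∀ u ∈ S, ∀ v ∈ S, u ≠ v → ¬ G.Adj u v ∧ ∀ w, ¬ (G.Adj u w ∧ G.Adj w v)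

def IsIFPartition {V : Type*} (G : SimpleGraph V) (A B : Set V) : Prop :=
  A ∪ B = Set.univ ∧ Disjoint A B ∧ TwoIndependent G A ∧ (G.induce B).IsAcyclic

def IsAssignment {V : Type*} (I F U : Set V) : Prop :=
  I ∪ F ∪ U = Set.univ ∧ Disjoint I F ∧ Disjoint I U ∧ Disjoint F U

noncomputable def rho {V : Type*} (G : SimpleGraph V) (I F U : Set V) (H : G.Subgraph) : ℤ :=
  (H.verts ∩ I).ncard + 4 * (H.verts ∩ F).ncard + 5 * (H.verts ∩ U).ncard
    - 4 * Nat.card H.edgeSet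

noncomputable def rhoSet {V : Type*} (G : SimpleGraph V) (I F U : Set V) (S : Set V) : ℤ :=
  (S ∩ I).ncard + 4 * (S ∩ F).ncard + 5 * (S ∩ U).ncard - 4 * edgeCount (G.induce S)

def IsCounterexample {V : Type*} [Fintype V] (G : SimpleGraph V) (I F U : Set V) : Prop :=
  IsAssignment I F U ∧
  (∀ H : G.Subgraph, H.verts.Nonempty → 0 < rho G I F U H) ∧
  ¬ ∃ A B : Set V, IsIFPartition G A B ∧ I ⊆ A ∧ F ⊆ B

def IsMinCounterexample {V : Type*} [Fintype V] (G : SimpleGraph V) (I F U : Set V) : Prop :=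
  IsCounterexample G I F U ∧
  ∀ (n : ℕ) (G' : SimpleGraph (Fin n)) (I' F' U' : Set (Fin n)),
    IsCounterexample G' I' F' U' →
    Fintype.card V + edgeCount G ≤ n + edgeCount G'

def IsThread {V : Type*} (G : SimpleGraph V) (I F U : Set V) (p : List V) : Prop :=
  p ≠ [] ∧ p.Nodup ∧ p.Chain' G.Adj ∧ (∀ v ∈ p, v ∈ U ∧ deg G v = 2) ∧
  (∀ w, w ∉ p → (∃ a ∈ p, G.Adj a w) → 3 ≤ deg G w ∨ w ∈ I ∪ F)

def BordersThread {V : Type*} (G : SimpleGraph V) (p : List V) (w : V) : Prop :=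
  w ∉ p ∧ ∃ a ∈ p, G.Adj a w

def IsStarForest {V : Type*} (H : SimpleGraph V) : Prop :=
  H.IsAcyclic ∧ ∀ a b c d : V, H.Adj a b → H.Adj b c → H.Adj c d → a = c ∨ b = d

def IsStarColoring {V : Type*} {k : ℕ} (G : SimpleGraph V) (c : V → Fin k) : Prop :=
  (∀ u v, G.Adj u v → c u ≠ c v) ∧
  ∀ i j : Fin k, IsStarForest (G.induce {v | c v = i ∨ c v = j})

def StarColorable {V : Type*} (G : SimpleGraph V) (k : ℕ) : Prop :=
  ∃ c : V → Fin k, IsStarColoring G c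

def MadLt {V : Type*} (G : SimpleGraph V) (q : ℚ) : Prop :=
  ∀ H : G.Subgraph, H.verts.Nonempty →
    (2 * (Nat.card H.edgeSet : ℚ)) / (H.verts.ncard : ℚ) < q

/-!
A proper coloring is a star coloring exactly when it uses at least three colors on every path with
four vertices. Suppose a level function on a forest changes by one along each edge and gives every
vertex at most one lower neighbor. Then reducing levels modulo `3` meets this condition: on a path
`x y z w` colored with two colors, the levels of `x` and `z` differ by `0` or `2` and agree modulo
`3`, so they are equal, and likewise for `y` and `w`; hence the higher of `y` and `z` has two
distinct lower neighbors. Finally, a 2-independent set can be given a single new color, because no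
two of its vertices lie at distance one or two.
-/

section

variable {V : Type*} {G : SimpleGraph V}

lemma isAcyclic_of_forall_adj_eq_or_eq
    (h : ∀ a b c d, G.Adj a b → G.Adj b c → G.Adj c d → a = c ∨ b = d) : G.IsAcyclic := by
  intro v p hp
  have hlen := hp.three_le_length
  have hadj (i : ℕ) (hi : i < 3) : G.Adj (p.getVert i) (p.getVert (i + 1)) :=
    p.adj_getVert_succ (by omega)
  rcases h _ _ _ _ (hadj 0 (by omega)) (hadj 1 (by omega)) (hadj 2 (by omega)) with h02 | h13
  · have := hp.getVert_injOn' (show 0 ≤ p.length - 1 by omega) (show 2 ≤ p.length - 1 by omega) h02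
    omega
  · have := hp.getVert_injOn (x₁ := 1) (x₂ := 3) ⟨by omega, by omega⟩ ⟨by omega, by omega⟩ h13
    omega

lemma isStarColoring_iff {k : ℕ} {c : V → Fin k} :
    IsStarColoring G c ↔
      (∀ u v, G.Adj u v → c u ≠ c v) ∧
      ∀ x y z w, G.Adj x y → G.Adj y z → G.Adj z w → c x = c z → c y = c w → x = z ∨ y = w := by
  refine and_congr_right fun hproper ↦ ⟨fun hstar x y z w hxy hyz hzw hxz hyw ↦ ?_,
    fun hpath i j ↦ ?_⟩
  · simpa using (hstar (c x) (c y)).2 ⟨x, .inl rfl⟩ ⟨y, .inr rfl⟩ ⟨z, .inl hxz.symm⟩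
      ⟨w, .inr hyw.symm⟩ hxy hyz hzw
  · have htwo : ∀ x y z w, (G.induce {v | c v = i ∨ c v = j}).Adj x y →
        (G.induce {v | c v = i ∨ c v = j}).Adj y z →
        (G.induce {v | c v = i ∨ c v = j}).Adj z w → x = z ∨ y = w := by
      rintro ⟨x, hx⟩ ⟨y, hy⟩ ⟨z, hz⟩ ⟨w, hw⟩ (hxy : G.Adj x y) (hyz : G.Adj y z) (hzw : G.Adj z w)
      have alternate {a b d : V} (ha : c a = i ∨ c a = j) (hb : c b = i ∨ c b = j)
          (hd : c d = i ∨ c d = j) (hab : G.Adj a b) (hbd : G.Adj b d) : c a = c d := by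
        have := hproper a b hab
        have := hproper b d hbd
        grind
      simpa using hpath x y z w hxy hyz hzw (alternate hx hy hz hxy hyz)
        (alternate hy hz hw hyz hzw)
    exact ⟨isAcyclic_of_forall_adj_eq_or_eq htwo, htwo⟩

/-- A level function on a graph: the height above the root in a rooted forest, with the parent of a
vertex being its neighbor one level below. Roots need not have level `0`. -/
structure IsLevelFunction (G : SimpleGraph V) (f : V → ℕ) : Prop where
  eq_succ_or_eq_succ : ∀ u v, G.Adj u v → f u = f v + 1 ∨ f v = f u + 1
  parent_unique : ∀ u u' v, G.Adj u v → G.Adj u' v → f v = f u + 1 → f v = f u' + 1 → u = u'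

lemma IsLevelFunction.starColorable_three {f : V → ℕ} (hf : IsLevelFunction G f) :
    StarColorable G 3 := by
  have mod_eq {u v : V} (h : Fin.ofNat 3 (f u) = Fin.ofNat 3 (f v)) : f u % 3 = f v % 3 :=
    congrArg Fin.val h
  have level_eq {a b d : V} (hab : G.Adj a b) (hbd : G.Adj b d)
      (had : Fin.ofNat 3 (f a) = Fin.ofNat 3 (f d)) : f a = f d := by
    have := mod_eq had
    have := hf.eq_succ_or_eq_succ a b hab
    have := hf.eq_succ_or_eq_succ b d hbd
    omega
  refine ⟨fun v ↦ Fin.ofNat 3 (f v), isStarColoring_iff.2 ⟨fun u v huv h ↦ ?_, ?_⟩⟩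
  · have := mod_eq h
    have := hf.eq_succ_or_eq_succ u v huv
    omega
  · intro x y z w hxy hyz hzw hxz hyw
    have hxz : f x = f z := level_eq hxy hyz hxz
    have hyw : f y = f w := level_eq hyz hzw hyw
    rcases hf.eq_succ_or_eq_succ y z hyz with h | h
    · exact .inl (hf.parent_unique x z y hxy hyz.symm (hxz ▸ h) h)
    · exact .inr (hf.parent_unique y w z hyz hzw.symm h (hyw ▸ h))

lemma eq_of_isAcyclic_of_adj_of_dist_eq_succ (hG : G.IsAcyclic) {r u u' v : V}
    (hr : G.Reachable r v) (hu : G.Adj u v) (hu' : G.Adj u' v)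
    (hd : G.dist r v = G.dist r u + 1) (hd' : G.dist r v = G.dist r u' + 1) : u = u' := by
  obtain ⟨p, hp⟩ := (hr.trans hu.symm.reachable).exists_walk_length_eq_dist
  obtain ⟨q, hq⟩ := (hr.trans hu'.symm.reachable).exists_walk_length_eq_dist
  have hpath : (p.concat hu).IsPath := Walk.isPath_of_length_eq_dist _ (by simp [hp, hd])
  have hpath' : (q.concat hu').IsPath := Walk.isPath_of_length_eq_dist _ (by simp [hq, hd'])
  have hpq : p.concat hu = q.concat hu' :=
    Subtype.mk.inj ((hG.subsingleton_path r v).elim ⟨_, hpath⟩ ⟨_, hpath'⟩)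
  exact (Walk.concat_inj hpq).1

lemma exists_isLevelFunction_of_isAcyclic (hG : G.IsAcyclic) :
    ∃ f : V → ℕ, IsLevelFunction G f := by
  let root (v : V) : V := (G.connectedComponentMk v).out
  have root_reachable (v : V) : G.Reachable (root v) v :=
    ConnectedComponent.exact (Quot.out_eq (G.connectedComponentMk v))
  have root_eq {u v : V} (h : G.Adj u v) : root u = root v :=
    congrArg Quot.out (ConnectedComponent.sound h.reachable)
  refine ⟨fun v ↦ G.dist (root v) v, fun u v huv ↦ ?_, fun u u' v hu hu' hd hd' ↦ ?_⟩
  · rw [root_eq huv]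
    exact hG.dist_eq_dist_add_one_of_adj_of_reachable _ huv (root_eq huv ▸ root_reachable u)
  · rw [root_eq hu] at hd
    rw [root_eq hu'] at hd'
    exact eq_of_isAcyclic_of_adj_of_dist_eq_succ hG (root_reachable v) hu hu' hd hd'

lemma starColorable_three_of_isAcyclic (hG : G.IsAcyclic) : StarColorable G 3 :=
  let ⟨_, hf⟩ := exists_isLevelFunction_of_isAcyclic hG
  hf.starColorable_three

lemma TwoIndependent.not_adj {S : Set V} (hS : TwoIndependent G S) {u v : V}
    (hu : u ∈ S) (hv : v ∈ S) : ¬ G.Adj u v :=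
  fun huv ↦ (hS u hu v hv huv.ne).1 huv

lemma TwoIndependent.eq_of_adj_of_adj {S : Set V} (hS : TwoIndependent G S) {u v w : V}
    (hu : u ∈ S) (hv : v ∈ S) (huw : G.Adj u w) (hwv : G.Adj w v) : u = v :=
  by_contra fun hne ↦ (hS u hu v hv hne).2 w ⟨huw, hwv⟩

lemma StarColorable.succ_of_twoIndependent {S : Set V} {k : ℕ}
    (hS : TwoIndependent G S) (h : StarColorable (G.induce Sᶜ) k) : StarColorable G (k + 1) := by
  classical
  obtain ⟨c, hc⟩ := h
  obtain ⟨hproper, hpath⟩ := isStarColoring_iff.1 hc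
  let c' (v : V) : Fin (k + 1) := if hv : v ∈ S then Fin.last k else (c ⟨v, hv⟩).castSucc
  have eq_last_iff (v : V) : c' v = Fin.last k ↔ v ∈ S := by
    by_cases hv : v ∈ S <;> simp [c', hv]
  have mem_iff {u v : V} (huv : c' u = c' v) : u ∈ S ↔ v ∈ S := by
    rw [← eq_last_iff, ← eq_last_iff, huv]
  have color_eq {u v : V} (huv : c' u = c' v) (hu : u ∉ S) (hv : v ∉ S) :
      c ⟨u, hu⟩ = c ⟨v, hv⟩ := by
    simpa [c', hu, hv] using huv
  refine ⟨c', isStarColoring_iff.2 ⟨fun u v huv h ↦ ?_, fun x y z w hxy hyz hzw hxz hyw ↦ ?_⟩⟩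
  · by_cases hu : u ∈ S
    · exact hS.not_adj hu ((mem_iff h).1 hu) huv
    · have hv : v ∉ S := mt (mem_iff h).2 hu
      exact hproper ⟨u, hu⟩ ⟨v, hv⟩ huv (color_eq h hu hv)
  · by_cases hx : x ∈ S
    · exact .inl (hS.eq_of_adj_of_adj hx ((mem_iff hxz).1 hx) hxy hyz)
    by_cases hy : y ∈ S
    · exact .inr (hS.eq_of_adj_of_adj hy ((mem_iff hyw).1 hy) hyz hzw)
    have hz : z ∉ S := mt (mem_iff hxz).2 hx
    have hw : w ∉ S := mt (mem_iff hyw).2 hy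
    simpa using hpath ⟨x, hx⟩ ⟨y, hy⟩ ⟨z, hz⟩ ⟨w, hw⟩ hxy hyz hzw (color_eq hxz hx hz)
      (color_eq hyw hy hw)

end

theorem starChromatic_le_four_of_ifPartition_general {V : Type*} (G : SimpleGraph V)
    (A B : Set V) (h : IsIFPartition G A B) : StarColorable G 4 := by
  obtain ⟨hunion, hdisj, hA, hB⟩ := h
  obtain rfl : Aᶜ = B := (IsCompl.of_eq hdisj.eq_bot hunion).compl_eq
  exact (starColorable_three_of_isAcyclic hB).succ_of_twoIndependent hA

/-- If a finite simple graph has an I,F-partition, then its star chromatic number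
is at most `4`. -/
theorem starChromatic_le_four_of_ifPartition {V : Type*} [Fintype V] (G : SimpleGraph V)
    (A B : Set V) (h : IsIFPartition G A B) : StarColorable G 4 :=
  starChromatic_le_four_of_ifPartition_general G A B h
end

section
/- For each n ≥ 3, let G_n be the graph obtained from a cycle C with vertices v_1, …, v_n by adding, for each i, three new vertices a_i, b_i, c_i forming a triangle together with the edge v_i a_i. Then Mad(G_n) = 5/2 and G_n has no I,F-partition. -/
/-!
Split the unit weight of every edge of `G_n` between its two endpoints: a cycle edge `v_i v_{i+1}`
goes entirely to `v_i`, the edges `v_i a_i`, `a_i b_i` and `a_i c_i` are split as `1/4 + 3/4` with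
the smaller share at the endpoint named first, and `b_i c_i` is halved. Every vertex then receives
exactly `5/4`, so `|E(H)| ≤ 5/4 |V(H)|` for all subgraphs `H`, with equality for `H = G_n`.

In an I,F-partition, every cycle meets `𝓘`. The pendant triangle at `v_i` therefore contains a
vertex of `𝓘`, and it is within distance two of `v_i`, so `v_i ∉ 𝓘`. Hence the cycle `v_1 ⋯ v_n`
avoids `𝓘`, a contradiction.
-/

open SimpleGraph

/-- The sharpness example `G_n`: a cycle `v_1, …, v_n` (the vertices `Sum.inl i`) where each
`v_i` has a pendant triangle `a_i b_i c_i` (the vertices `Sum.inr (i, 0/1/2)`) attached by the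
edge `v_i a_i`. -/
def sharpGraph (n : ℕ) : SimpleGraph (Fin n ⊕ Fin n × Fin 3) :=
  SimpleGraph.fromRel (fun x y =>
    (∃ i : Fin n, x = Sum.inl i ∧
      y = Sum.inl ⟨((i : ℕ) + 1) % n, Nat.mod_lt _ (Nat.lt_of_le_of_lt (Nat.zero_le _) i.isLt)⟩) ∨
    (∃ i : Fin n, x = Sum.inl i ∧ y = Sum.inr (i, 0)) ∨
    (∃ (i : Fin n) (j k : Fin 3), j ≠ k ∧ x = Sum.inr (i, j) ∧ y = Sum.inr (i, k)))

/-- A fractional orientation of `G`: the unit weight of each edge `xy` is divided into a share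
`w x y` of `x` and a share `w y x` of `y`. Pairs of non-adjacent vertices carry weight zero.
A bound on the total share of every vertex bounds the density of all subgraphs. -/
structure IsFractionalOrientation {V K : Type*} [AddMonoidWithOne K] [LE K]
    (G : SimpleGraph V) (w : V → V → K) : Prop where
  nonneg : ∀ x y, 0 ≤ w x y
  eq_zero_of_not_adj : ∀ {x y}, ¬ G.Adj x y → w x y = 0
  add_swap : ∀ {x y}, G.Adj x y → w x y + w y x = 1

namespace IsFractionalOrientation

variable {V K : Type*} {G : SimpleGraph V} {w : V → V → K}

lemma restrict [AddMonoidWithOne K] [Preorder K] (hw : IsFractionalOrientation G w)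
    {H : SimpleGraph V} [DecidableRel H.Adj] (hHG : H ≤ G) :
    IsFractionalOrientation H fun x y ↦ if H.Adj x y then w x y else 0 where
  nonneg x y := by
    split_ifs
    exacts [hw.nonneg x y, le_rfl]
  eq_zero_of_not_adj hxy := if_neg hxy
  add_swap hxy := by simpa only [hxy, hxy.symm, if_true] using hw.add_swap (hHG hxy)

variable [Field K] [LinearOrder K] [IsStrictOrderedRing K] [Fintype V] {d : K}

lemma sum_sum_eq_card_edgeSet (hw : IsFractionalOrientation G w) :
    ∑ x, ∑ y, w x y = Nat.card G.edgeSet := by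
  classical
  have hswap (x y : V) : w x y + w y x = if G.Adj x y then 1 else 0 := by
    split_ifs with hxy
    · exact hw.add_swap hxy
    · rw [hw.eq_zero_of_not_adj hxy, hw.eq_zero_of_not_adj (mt Adj.symm hxy), add_zero]
  have htwice : 2 * ∑ x, ∑ y, w x y = 2 * Nat.card G.edgeSet := calc
    2 * ∑ x, ∑ y, w x y = ∑ x, ∑ y, (w x y + w y x) := by
      simp only [Finset.sum_add_distrib]
      rw [two_mul, Finset.sum_comm (f := fun x y ↦ w y x)]
    _ = ∑ x, (G.degree x : K) := by
      simp only [hswap, Finset.sum_boole, ← card_neighborFinset_eq_degree,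
        neighborFinset_eq_filter]
    _ = 2 * Nat.card G.edgeSet := by
      rw [← Nat.cast_sum, sum_degrees_eq_twice_card_edges, Nat.card_eq_card_toFinset, edgeFinset]
      push_cast
      rfl
  exact mul_left_cancel₀ two_ne_zero htwice

lemma card_edgeSet_eq (hw : IsFractionalOrientation G w) (hd : ∀ x, ∑ y, w x y = d) :
    (Nat.card G.edgeSet : K) = d * Nat.card V := by
  rw [← hw.sum_sum_eq_card_edgeSet]
  simp only [hd, Finset.sum_const, Finset.card_univ, nsmul_eq_mul, Nat.card_eq_fintype_card,
    mul_comm]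

lemma card_edgeSet_le (hw : IsFractionalOrientation G w) (hd : ∀ x, ∑ y, w x y ≤ d)
    (H : G.Subgraph) : (Nat.card H.edgeSet : K) ≤ d * H.verts.ncard := by
  classical
  have hout (x : V) :
      ∑ y, (if H.spanningCoe.Adj x y then w x y else 0) ≤ if x ∈ H.verts then d else 0 := by
    split_ifs with hx
    · refine (Finset.sum_le_sum fun y _ ↦ ?_).trans (hd x)
      split_ifs
      exacts [le_rfl, hw.nonneg x y]
    · exact (Finset.sum_eq_zero fun y _ ↦ if_neg fun hxy ↦ hx hxy.fst_mem).le
  calc (Nat.card H.edgeSet : K)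
      = ∑ x, ∑ y, (if H.spanningCoe.Adj x y then w x y else 0) := by
        rw [(hw.restrict H.spanningCoe_le).sum_sum_eq_card_edgeSet, H.edgeSet_spanningCoe]
    _ ≤ ∑ x, if x ∈ H.verts then d else 0 := Finset.sum_le_sum fun x _ ↦ hout x
    _ = d * H.verts.ncard := by
        rw [← Finset.sum_filter, Finset.sum_const, nsmul_eq_mul, mul_comm,
          Set.ncard_eq_toFinset_card', ← Set.filter_mem_univ_eq_toFinset]

lemma isGreatest_averageDegree [Nonempty V] (hw : IsFractionalOrientation G w)
    (hd : ∀ x, ∑ y, w x y = d) :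
    IsGreatest {q : K | ∃ H : G.Subgraph, H.verts.Nonempty ∧
      q = 2 * (Nat.card H.edgeSet : K) / (H.verts.ncard : K)} (2 * d) := by
  constructor
  · refine ⟨⊤, Set.univ_nonempty, ?_⟩
    rw [Subgraph.edgeSet_top, Subgraph.verts_top, Set.ncard_univ, hw.card_edgeSet_eq hd,
      ← mul_assoc, mul_div_cancel_right₀ _ (Nat.cast_ne_zero.2 Nat.card_pos.ne')]
  · rintro _ ⟨H, hH, rfl⟩
    have hverts : (0 : K) < H.verts.ncard := Nat.cast_pos.2 hH.ncard_pos
    rw [div_le_iff₀ hverts, mul_assoc]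
    exact mul_le_mul_of_nonneg_left (hw.card_edgeSet_le (fun x ↦ (hd x).le) H) zero_le_two

end IsFractionalOrientation

namespace IsIFPartition

variable {V : Type*} {G : SimpleGraph V} {A B : Set V}

lemma mem_right (h : IsIFPartition G A B) {x : V} (hx : x ∉ A) : x ∈ B :=
  (h.1.ge (Set.mem_univ x)).resolve_left hx

lemma exists_mem_left_of_cycleGraph (h : IsIFPartition G A B) {k : ℕ} (hk : 3 ≤ k)
    (f : Copy (cycleGraph k) G) : ∃ i, f i ∈ A := by
  by_contra! hf
  have hfree := isAcyclic_iff_free_cycleGraph.1 h.2.2.2 k hk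
  refine hfree ⟨⟨fun i ↦ ⟨f i, h.mem_right (hf i)⟩, ?_⟩, ?_⟩
  · exact fun hij ↦ f.toHom.map_adj hij
  · exact fun i j hij ↦ f.injective (congrArg Subtype.val hij)

end IsIFPartition

section CyclicSuccessor

variable {n : ℕ} [NeZero n]

lemma fin_add_one_add_one_ne_self (hn : 3 ≤ n) (i : Fin n) : i + 1 + 1 ≠ i := by
  have htwo : 2 % n ≠ 0 := by rw [Nat.mod_eq_of_lt] <;> lia
  simpa [add_assoc, Fin.ext_iff, Fin.val_add] using htwo

lemma fin_add_one_ne_self (hn : 2 ≤ n) (i : Fin n) : i + 1 ≠ i := by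
  have hone : 1 % n ≠ 0 := by rw [Nat.mod_eq_of_lt] <;> lia
  simpa [Fin.ext_iff] using hone

lemma cycleGraph_adj_iff_eq_add_one {i j : Fin n} :
    (cycleGraph n).Adj i j ↔ i ≠ j ∧ (j = i + 1 ∨ i = j + 1) := by
  obtain _ | _ | n := n
  · exact i.elim0
  · simp [Fin.fin_one_eq_zero i, Fin.fin_one_eq_zero j]
  · rw [cycleGraph_adj, sub_eq_iff_eq_add', sub_eq_iff_eq_add', or_comm, iff_and_self]
    rintro (rfl | rfl)
    exacts [(fin_add_one_ne_self (by lia) i).symm, fin_add_one_ne_self (by lia) j]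

end CyclicSuccessor

section SharpGraph

variable {n : ℕ} {i j : Fin n} {k l : Fin 3}

lemma sharpGraph_adj_inl_inl :
    (sharpGraph n).Adj (.inl i) (.inl j) ↔ (cycleGraph n).Adj i j := by
  have := i.neZero
  have hsucc (a b : Fin n) :
      b = ⟨(a + 1) % n, Nat.mod_lt _ (Nat.zero_lt_of_lt a.isLt)⟩ ↔ b = a + 1 := by
    simp [Fin.ext_iff, Fin.val_add]
  simp [sharpGraph, cycleGraph_adj_iff_eq_add_one, hsucc]

lemma sharpGraph_adj_inl_inr :
    (sharpGraph n).Adj (.inl i) (.inr (j, k)) ↔ i = j ∧ k = 0 := by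
  simp [sharpGraph, eq_comm]

lemma sharpGraph_adj_inr_inr :
    (sharpGraph n).Adj (.inr (i, k)) (.inr (j, l)) ↔ i = j ∧ k ≠ l := by
  simp only [sharpGraph, fromRel_adj]
  grind

/-- The split of the edges of `G_n` under which every vertex receives weight `5/4`; the first
argument is the receiving endpoint. The indices of the vectors and of the matrix stand for
`a_i`, `b_i`, `c_i`. -/
def sharpWeight (n : ℕ) [NeZero n] : Fin n ⊕ Fin n × Fin 3 → Fin n ⊕ Fin n × Fin 3 → ℚ
  | .inl i, .inl j => if j = i + 1 then 1 else 0
  | .inl i, .inr (j, k) => if i = j then ![1 / 4, 0, 0] k else 0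
  | .inr (i, k), .inl j => if i = j then ![3 / 4, 0, 0] k else 0
  | .inr (i, k), .inr (j, l) => if i = j then
      !![0, 1 / 4, 1 / 4; 3 / 4, 0, 1 / 2; 3 / 4, 1 / 2, 0] k l else 0

lemma sum_sharpWeight [NeZero n] (x : Fin n ⊕ Fin n × Fin 3) :
    ∑ y, sharpWeight n x y = 5 / 4 := by
  rcases x with i | ⟨i, k⟩ <;>
    simp only [sharpWeight, Fintype.sum_sum_type, Fintype.sum_prod_type_right, Finset.sum_ite_eq,
      Finset.sum_ite_eq', Finset.mem_univ, if_true, Fin.sum_univ_three]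
  · simp only [Matrix.cons_val]
    norm_num
  · fin_cases k <;> simp <;> norm_num

lemma isFractionalOrientation_sharpWeight [NeZero n] (hn : 3 ≤ n) :
    IsFractionalOrientation (sharpGraph n) (sharpWeight n) where
  nonneg x y := by
    rcases x with i | ⟨i, k⟩ <;> rcases y with j | ⟨j, l⟩ <;> refine ite_nonneg ?_ le_rfl
    · exact zero_le_one
    · fin_cases l <;> norm_num
    · fin_cases k <;> norm_num
    · fin_cases k <;> fin_cases l <;> norm_num
  eq_zero_of_not_adj {x y} hxy := by
    rcases x with i | ⟨i, k⟩ <;> rcases y with j | ⟨j, l⟩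
    · rw [sharpGraph_adj_inl_inl, cycleGraph_adj_iff_eq_add_one] at hxy
      refine if_neg fun hij ↦ hxy ⟨?_, .inl hij⟩
      exact hij ▸ (fin_add_one_ne_self (by lia) i).symm
    · rw [sharpGraph_adj_inl_inr] at hxy
      fin_cases l <;> simp_all [sharpWeight]
    · rw [adj_comm, sharpGraph_adj_inl_inr] at hxy
      fin_cases k <;> simp_all [sharpWeight, eq_comm]
    · rw [sharpGraph_adj_inr_inr] at hxy
      fin_cases k <;> fin_cases l <;> simp_all [sharpWeight]
  add_swap {x y} hxy := by
    rcases x with i | ⟨i, k⟩ <;> rcases y with j | ⟨j, l⟩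
    · rw [sharpGraph_adj_inl_inl, cycleGraph_adj_iff_eq_add_one] at hxy
      obtain ⟨-, rfl | rfl⟩ := hxy
      · simp [sharpWeight, (fin_add_one_add_one_ne_self hn i).symm]
      · simp [sharpWeight, (fin_add_one_add_one_ne_self hn j).symm]
    · obtain ⟨rfl, rfl⟩ := sharpGraph_adj_inl_inr.1 hxy
      norm_num [sharpWeight]
    · obtain ⟨rfl, rfl⟩ := sharpGraph_adj_inl_inr.1 hxy.symm
      norm_num [sharpWeight]
    · obtain ⟨rfl, hkl⟩ := sharpGraph_adj_inr_inr.1 hxy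
      fin_cases k <;> fin_cases l <;>
        first | exact absurd rfl hkl | norm_num [sharpWeight]

/-- The cycle `v_1 ⋯ v_n` of `G_n`. -/
def sharpCycle (n : ℕ) : cycleGraph n ↪g sharpGraph n where
  toEmbedding := .inl
  map_rel_iff' := sharpGraph_adj_inl_inl

/-- The triangle `a_i b_i c_i` of `G_n`. -/
def sharpTriangle (i : Fin n) : cycleGraph 3 ↪g sharpGraph n where
  toEmbedding := ⟨fun k ↦ .inr (i, k), fun k l hkl ↦ by simpa using hkl⟩
  map_rel_iff' {k l} := by
    change (sharpGraph n).Adj (.inr (i, k)) (.inr (i, l)) ↔ _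
    simp [sharpGraph_adj_inr_inr, cycleGraph_three_eq_top]

lemma not_isIFPartition_sharpGraph (hn : 3 ≤ n) (A B : Set (Fin n ⊕ Fin n × Fin 3)) :
    ¬ IsIFPartition (sharpGraph n) A B := by
  intro h
  obtain ⟨i, hi : Sum.inl i ∈ A⟩ := h.exists_mem_left_of_cycleGraph hn (sharpCycle n).toCopy
  obtain ⟨k, hk : Sum.inr (i, k) ∈ A⟩ :=
    h.exists_mem_left_of_cycleGraph le_rfl (sharpTriangle i).toCopy
  obtain ⟨hnadj, hdist⟩ := h.2.2.1 _ hi _ hk Sum.inl_ne_inr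
  have hroot : (sharpGraph n).Adj (.inl i) (.inr (i, 0)) := sharpGraph_adj_inl_inr.2 ⟨rfl, rfl⟩
  obtain rfl | hk0 := eq_or_ne k 0
  · exact hnadj hroot
  · exact hdist _ ⟨hroot, sharpGraph_adj_inr_inr.2 ⟨rfl, hk0.symm⟩⟩

end SharpGraph

/-- For every `n ≥ 3`, the graph `G_n` has maximum average degree exactly `5/2`
(that is, `5/2` is the greatest value of `2|E(H)|/|V(H)|` over nonempty subgraphs `H`),
and `G_n` has no I,F-partition. -/
theorem sharpGraph_mad_eq_and_no_ifPartition (n : ℕ) (hn : 3 ≤ n) :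
    IsGreatest {q : ℚ | ∃ H : (sharpGraph n).Subgraph, H.verts.Nonempty ∧
        q = 2 * (Nat.card H.edgeSet : ℚ) / (H.verts.ncard : ℚ)} (5 / 2) ∧
    ¬ ∃ A B : Set (Fin n ⊕ Fin n × Fin 3), IsIFPartition (sharpGraph n) A B := by
  have : NeZero n := ⟨by lia⟩
  have : Nonempty (Fin n ⊕ Fin n × Fin 3) := ⟨.inl ⟨0, by lia⟩⟩
  refine ⟨?_, fun ⟨A, B, h⟩ ↦ not_isIFPartition_sharpGraph hn A B h⟩
  rw [show (5 / 2 : ℚ) = 2 * (5 / 4) by norm_num]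
  exact (isFractionalOrientation_sharpWeight hn).isGreatest_averageDegree sum_sharpWeight
end

section
/- The complete bipartite graph K_{3,3} satisfies χ_s(K_{3,3}) = 4, but K_{3,3} has no I,F-partition. -/
open SimpleGraph

/-!
For `S` a set of vertices of a complete bipartite graph `K`, the graph `K[S]` contains a 4-cycle if
`S` has two vertices on each side, and is a star forest otherwise. Hence a proper colouring of `K`
is a star colouring exactly when it is injective on one of the two sides; as the other side needs a
further colour, `χ_s(K_{m,n}) = min m n + 1` for `m, n ≥ 1`.

Any two vertices of `K` are at distance at most `2`, so the set `𝓘` of an I,F-partition has at most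
one vertex. The forest `𝓕` has at most one vertex on some side, and this side has therefore at most
two vertices in all.
-/

theorem card_lt_of_injective_of_forall_ne {α : Type*} {k : ℕ} {f : α → Fin k}
    (hf : Function.Injective f) {i : Fin k} (hi : ∀ a, f a ≠ i) : ENat.card α < k := by
  have hrange : Set.range f ≠ Set.univ := fun h ↦ by
    obtain ⟨a, ha⟩ := Set.range_eq_univ.1 h i
    exact hi a ha
  calc ENat.card α ≤ (Set.range f).encard := hf.encard_range
    _ < ENat.card (Fin k) := (Set.toFinite _).encard_lt_card hrange
    _ = k := by simp

theorem card_le_two_of_subsingleton_of_union_eq_univ {α : Type*} {s t : Set α}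
    (hs : s.Subsingleton) (ht : t.Subsingleton) (hst : s ∪ t = Set.univ) : ENat.card α ≤ 2 :=
  calc ENat.card α = (s ∪ t).encard := by rw [hst, Set.encard_univ]
    _ ≤ s.encard + t.encard := Set.encard_union_le s t
    _ ≤ 1 + 1 := add_le_add (Set.encard_le_one_iff_subsingleton.2 hs)
      (Set.encard_le_one_iff_subsingleton.2 ht)
    _ = 2 := one_add_one_eq_two

theorem subsingleton_compl_singleton_of_card_le_two {α : Type*} (h : ENat.card α ≤ 2)
    (a : α) : ({a}ᶜ : Set α).Subsingleton := by
  rw [← Set.encard_univ, ← Set.encard_add_encard_compl {a}, Set.encard_singleton,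
    ← one_add_one_eq_two, ENat.add_le_add_iff_left ENat.one_ne_top] at h
  exact Set.encard_le_one_iff_subsingleton.1 h

theorem isStarForest_iff {V : Type*} {H : SimpleGraph V} :
    IsStarForest H ↔ ∀ a b c d, H.Adj a b → H.Adj b c → H.Adj c d → a = c ∨ b = d := by
  refine ⟨And.right, fun h ↦ ⟨fun v w hw ↦ ?_, h⟩⟩
  have hnodup := hw.support_nodup
  match w, hw.three_le_length with
  | .cons hab (.cons hbc (.cons hcd _)), _ =>
    rcases h _ _ _ _ hab hbc hcd with rfl | rfl <;> simp at hnodup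

theorem subsingleton_commonNeighbors_of_isAcyclic {V : Type*} {G : SimpleGraph V}
    (hG : G.IsAcyclic) {u v : V} (huv : u ≠ v) : (G.commonNeighbors u v).Subsingleton := by
  rintro w ⟨huw, hvw⟩ x ⟨hux, hvx⟩
  let path (y : V) (huy : G.Adj u y) (hvy : G.Adj v y) : G.Path u v :=
    ⟨.cons huy (.cons hvy.symm .nil), by simp [huv, huy.ne, hvy.ne']⟩
  have := hG.subsingleton_path u v
  exact congrArg (fun p ↦ p.1.snd) (Subsingleton.elim (path w huw hvw) (path x hux hvx))

section CompleteBipartite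

variable {α β : Type*}

theorem isStarForest_induce_completeBipartiteGraph {S : Set (α ⊕ β)}
    (hS : (Sum.inl ⁻¹' S).Subsingleton ∨ (Sum.inr ⁻¹' S).Subsingleton) :
    IsStarForest ((completeBipartiteGraph α β).induce S) := by
  rw [isStarForest_iff]
  rintro ⟨a | a, ha⟩ ⟨b | b, hb⟩ ⟨c | c, hc⟩ ⟨d | d, hd⟩ hab hbc hcd <;>
    simp at hab hbc hcd
  · simpa using hS.imp (· ha hc) (· hb hd)
  · simpa using hS.symm.imp (· ha hc) (· hb hd)

theorem isAcyclic_induce_completeBipartiteGraph_iff {S : Set (α ⊕ β)} :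
    ((completeBipartiteGraph α β).induce S).IsAcyclic ↔
      (Sum.inl ⁻¹' S).Subsingleton ∨ (Sum.inr ⁻¹' S).Subsingleton := by
  refine ⟨fun hS ↦ ?_, fun hS ↦ (isStarForest_induce_completeBipartiteGraph hS).1⟩
  by_contra! h
  obtain ⟨⟨a, ha, a', ha', haa'⟩, b, hb, b', hb', hbb'⟩ := h
  have hne : (⟨.inl a, ha⟩ : S) ≠ ⟨.inl a', ha'⟩ := by simpa using haa'
  have hmem (y : β) (hy : .inr y ∈ S) : (⟨.inr y, hy⟩ : S) ∈
      ((completeBipartiteGraph α β).induce S).commonNeighbors ⟨.inl a, ha⟩ ⟨.inl a', ha'⟩ := by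
    simp [mem_commonNeighbors]
  have heq := subsingleton_commonNeighbors_of_isAcyclic hS hne (hmem b hb) (hmem b' hb')
  exact hbb' (by simpa using heq)

theorem isStarColoring_completeBipartiteGraph_iff {k : ℕ} {c : α ⊕ β → Fin k} :
    IsStarColoring (completeBipartiteGraph α β) c ↔
      (∀ a b, c (.inl a) ≠ c (.inr b)) ∧
        (Function.Injective (c ∘ Sum.inl) ∨ Function.Injective (c ∘ Sum.inr)) := by
  constructor
  · rintro ⟨hproper, hstar⟩
    refine ⟨fun a b ↦ hproper _ _ (by simp), ?_⟩
    by_contra! h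
    simp only [Function.not_injective_iff, Function.comp_apply] at h
    obtain ⟨⟨a, a', hca, haa'⟩, b, b', hcb, hbb'⟩ := h
    rcases isAcyclic_induce_completeBipartiteGraph_iff.1 (hstar (c (.inl a)) (c (.inr b))).1 with
      hl | hr
    · exact haa' (hl (Or.inl rfl) (Or.inl hca.symm))
    · exact hbb' (hr (Or.inr rfl) (Or.inr hcb.symm))
  · rintro ⟨hne, hinj⟩
    refine ⟨?_, fun i j ↦ isStarForest_induce_completeBipartiteGraph ?_⟩
    · rintro (a | b) (a' | b') hadj <;> simp at hadj
      exacts [hne a b', (hne a' b).symm]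
    · by_contra! h
      obtain ⟨⟨a, ha, a', ha', haa'⟩, b, hb, b', hb', hbb'⟩ := h
      -- The two sides share no colour, so each of them uses only one of `i` and `j`.
      have hca : c (.inl a) = c (.inl a') := by grind
      have hcb : c (.inr b) = c (.inr b') := by grind
      exact hinj.elim (haa' <| · hca) (hbb' <| · hcb)

theorem StarColorable.completeBipartiteGraph_swap {k : ℕ}
    (h : StarColorable (completeBipartiteGraph α β) k) :
    StarColorable (completeBipartiteGraph β α) k := by
  obtain ⟨c, hc⟩ := h
  obtain ⟨hne, hinj⟩ := isStarColoring_completeBipartiteGraph_iff.1 hc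
  exact ⟨c ∘ Sum.swap,
    isStarColoring_completeBipartiteGraph_iff.2 ⟨fun b a ↦ (hne a b).symm, hinj.symm⟩⟩

theorem starColorable_completeBipartiteGraph_of_card_lt {k : ℕ} (hk : ENat.card α < k) :
    StarColorable (completeBipartiteGraph α β) k := by
  have : Finite α := ENat.card_lt_top.1 (hk.trans (ENat.natCast_lt_top k))
  have := Fintype.ofFinite α
  obtain ⟨e⟩ : Nonempty (Option α ↪ Fin k) := by
    refine Function.Embedding.nonempty_of_card_le ?_
    simpa [Nat.succ_le_iff] using hk
  refine ⟨Sum.elim (e ∘ some) fun _ ↦ e none, isStarColoring_completeBipartiteGraph_iff.2 ⟨?_, ?_⟩⟩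
  · simp
  · exact .inl (e.injective.comp (Option.some_injective α))

theorem starColorable_completeBipartiteGraph_iff [Nonempty α] [Nonempty β] {k : ℕ} :
    StarColorable (completeBipartiteGraph α β) k ↔ min (ENat.card α) (ENat.card β) < k := by
  rw [min_lt_iff]
  constructor
  · rintro ⟨c, hc⟩
    obtain ⟨hne, hinj⟩ := isStarColoring_completeBipartiteGraph_iff.1 hc
    have ⟨a⟩ := ‹Nonempty α›
    have ⟨b⟩ := ‹Nonempty β›
    exact hinj.imp (card_lt_of_injective_of_forall_ne · fun x ↦ hne x b)
      (card_lt_of_injective_of_forall_ne · fun y ↦ (hne a y).symm)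
  · rintro (hα | hβ)
    · exact starColorable_completeBipartiteGraph_of_card_lt hα
    · exact (starColorable_completeBipartiteGraph_of_card_lt hβ).completeBipartiteGraph_swap

theorem twoIndependent_completeBipartiteGraph_iff [Nonempty α] [Nonempty β] {A : Set (α ⊕ β)} :
    TwoIndependent (completeBipartiteGraph α β) A ↔ A.Subsingleton := by
  refine ⟨fun hA u hu v hv ↦ ?_, fun hA u hu v hv huv ↦ (huv (hA hu hv)).elim⟩
  by_contra huv
  obtain ⟨hadj, hcommon⟩ := hA u hu v hv huv
  have ⟨a⟩ := ‹Nonempty α›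
  have ⟨b⟩ := ‹Nonempty β›
  rcases u with u | u <;> rcases v with v | v
  · exact hcommon (.inr b) (by simp)
  · exact hadj (by simp)
  · exact hadj (by simp)
  · exact hcommon (.inl a) (by simp)

theorem exists_isIFPartition_completeBipartiteGraph_iff [Nonempty α] [Nonempty β] :
    (∃ A B, IsIFPartition (completeBipartiteGraph α β) A B) ↔
      min (ENat.card α) (ENat.card β) ≤ 2 := by
  rw [min_le_iff]
  constructor
  · rintro ⟨A, B, hunion, -, hA, hB⟩
    have hsub := twoIndependent_completeBipartiteGraph_iff.1 hA
    refine (isAcyclic_induce_completeBipartiteGraph_iff.1 hB).imp (fun hl ↦ ?_) fun hr ↦ ?_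
    · exact card_le_two_of_subsingleton_of_union_eq_univ (hsub.preimage Sum.inl_injective) hl
        (by rw [← Set.preimage_union, hunion, Set.preimage_univ])
    · exact card_le_two_of_subsingleton_of_union_eq_univ (hsub.preimage Sum.inr_injective) hr
        (by rw [← Set.preimage_union, hunion, Set.preimage_univ])
  · have isIFPartition_singleton (v : α ⊕ β)
        (hv : (Sum.inl ⁻¹' {v}ᶜ).Subsingleton ∨ (Sum.inr ⁻¹' {v}ᶜ).Subsingleton) :
        IsIFPartition (completeBipartiteGraph α β) {v} {v}ᶜ :=
      ⟨Set.union_compl_self _, disjoint_compl_right,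
        twoIndependent_completeBipartiteGraph_iff.2 Set.subsingleton_singleton,
        isAcyclic_induce_completeBipartiteGraph_iff.2 hv⟩
    have ⟨a⟩ := ‹Nonempty α›
    have ⟨b⟩ := ‹Nonempty β›
    rintro (hα | hβ)
    · refine ⟨_, _, isIFPartition_singleton (.inl a) (.inl ?_)⟩
      exact (subsingleton_compl_singleton_of_card_le_two hα a).anti
        fun _ ↦ mt (congrArg Sum.inl)
    · refine ⟨_, _, isIFPartition_singleton (.inr b) (.inr ?_)⟩
      exact (subsingleton_compl_singleton_of_card_le_two hβ b).anti
        fun _ ↦ mt (congrArg Sum.inr)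

theorem k33_starChromatic_eq_four_and_no_ifPartition_general [Nonempty α] [Nonempty β] :
    (∀ k : ℕ, StarColorable (completeBipartiteGraph α β) k ↔
      min (ENat.card α) (ENat.card β) < k) ∧
    ((∃ A B : Set (α ⊕ β), IsIFPartition (completeBipartiteGraph α β) A B) ↔
      min (ENat.card α) (ENat.card β) ≤ 2) :=
  ⟨fun _ ↦ starColorable_completeBipartiteGraph_iff,
    exists_isIFPartition_completeBipartiteGraph_iff⟩

end CompleteBipartite

/-- `K_{3,3}` has star chromatic number exactly `4`, but has no I,F-partition. -/
theorem k33_starChromatic_eq_four_and_no_ifPartition :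
    (StarColorable (completeBipartiteGraph (Fin 3) (Fin 3)) 4 ∧
      ¬ StarColorable (completeBipartiteGraph (Fin 3) (Fin 3)) 3) ∧
    ¬ ∃ A B : Set (Fin 3 ⊕ Fin 3),
        IsIFPartition (completeBipartiteGraph (Fin 3) (Fin 3)) A B := by
  obtain ⟨hstar, hpartition⟩ :=
    k33_starChromatic_eq_four_and_no_ifPartition_general (α := Fin 3) (β := Fin 3)
  norm_num [hstar, hpartition]
end

section
/- Let G be an assigned graph with vertex partition I ⊔ F ⊔ U satisfying all of the following: every vertex of I has degree at least 1; every vertex of U has degree at least 2; every vertex of F has degree at least 3; G contains no 3⁺-thread; no 4-vertex in U is incident to four 2-threads; no 3-vertex in F ∪ U having no neighbor in I is incident to a 2-thread; no 3-vertex in U is incident to three 1-threads all of whose bordering vertices lie in F ∪ U; and no 4-vertex in U is incident to three 2-threads and to a 1-thread whose other bordering vertex lies in F ∪ U. Then ρ_G(G) ≤ 0, i.e., |I| + 4|F| + 5|U| ≤ 4|E(G)|. -/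
open SimpleGraph

/-! The proof is by discharging. Give `v` the charge `2 deg v - w v`, where `w` is `1` on `I`,
`4` on `F` and `5` on `U`, so that the total charge is `-ρ(G)`. A vertex of `I` sends `1` along each
of its edges; any other vertex sends `1` into each incident 2-thread and `1/2` into each incident
1-thread having no neighbor in `I`. A 2-vertex of `U` then receives the unit of charge it lacks. A
vertex with a neighbor in `I` gets back from it the unit of charge that it may lack after paying its
other neighbors, and the excluded configurations keep the remaining vertices of degree 3 and 4 from
sending more than they have. -/

section Graph

variable {V : Type*} {G : SimpleGraph V} {v x : V}

lemma deg_eq_degree (G : SimpleGraph V) (v : V) [Fintype (G.neighborSet v)] :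
    deg G v = G.degree v :=
  Nat.card_eq_fintype_card.trans (G.card_neighborSet_eq_degree v)

lemma card_neighborFinset_eq_deg (G : SimpleGraph V) (v : V) [Fintype (G.neighborSet v)] :
    (G.neighborFinset v).card = deg G v :=
  (deg_eq_degree G v).symm

lemma exists_neighborSet_eq_pair_of_deg_eq_two (hdeg : deg G v = 2) (hx : G.Adj v x) :
    ∃ y, x ≠ y ∧ G.neighborSet v = {x, y} := by
  obtain ⟨a, b, hab, hN⟩ := Set.ncard_eq_two.mp hdeg
  have hmem : x ∈ G.neighborSet v := hx
  rw [hN] at hmem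
  rcases hmem with rfl | rfl
  · exact ⟨b, hab, hN⟩
  · exact ⟨a, hab.symm, hN.trans (Set.pair_comm a x)⟩

lemma sum_deg_eq_two_mul_edgeCount [Fintype V] (G : SimpleGraph V) :
    ∑ v, deg G v = 2 * edgeCount G := by
  classical
  simp only [deg_eq_degree, G.sum_degrees_eq_twice_card_edges, edgeCount,
    Nat.card_eq_fintype_card, edgeFinset_card]

lemma sum_sum_neighborFinset_comm {M : Type*} [AddCommMonoid M] [Fintype V] [G.LocallyFinite]
    (f : V → V → M) :
    ∑ v, ∑ u ∈ G.neighborFinset v, f u v = ∑ v, ∑ u ∈ G.neighborFinset v, f v u :=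
  Finset.sum_comm' fun v u ↦ by simp [G.adj_comm v u]

end Graph

lemma sum_le_sum_add_card_sub_card_mul {ι R : Type*} [Ring R] [PartialOrder R] [IsOrderedRing R]
    {s t : Finset ι} {f : ι → R} {k : R} (hts : t ⊆ s)
    (hf : ∀ i ∈ s, i ∉ t → f i ≤ k) :
    ∑ i ∈ s, f i ≤ ∑ i ∈ t, f i + (s.card - t.card) * k := by
  classical
  have hrest : ∑ i ∈ s \ t, f i ≤ (s \ t).card • k :=
    Finset.sum_le_card_nsmul _ _ _ fun i hi ↦
      (Finset.mem_sdiff.mp hi).elim (hf i)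
  rw [nsmul_eq_mul, Finset.card_sdiff_of_subset hts, Nat.cast_sub (Finset.card_le_card hts)]
    at hrest
  rw [← Finset.sum_sdiff hts, add_comm]
  gcongr

lemma sum_indicator_one_eq_ncard {ι R : Type*} [Fintype ι] [NonAssocSemiring R] (S : Set ι) :
    ∑ i, S.indicator (1 : ι → R) i = S.ncard := by
  classical
  simp [Set.indicator_apply, Finset.sum_boole, Set.ncard_eq_toFinset_card']

/-! ### Threads -/

section Threads

variable {V : Type*} {G : SimpleGraph V} {I F U : Set V} {p : List V} {a u v w : V}

lemma IsAssignment.mem_union_of_notMem (hassign : IsAssignment I F U) (hv : v ∉ I) :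
    v ∈ F ∪ U := by
  have hcover : v ∈ I ∪ F ∪ U := hassign.1 ▸ Set.mem_univ v
  rw [Set.union_assoc] at hcover
  exact hcover.resolve_left hv

/-- The vertices of which threads are made: those of `U` having degree 2. -/
def IsThreadVertex (G : SimpleGraph V) (U : Set V) (v : V) : Prop :=
  v ∈ U ∧ deg G v = 2

/-- A path, listed by its vertices, all of which are thread vertices. Unlike a thread, it may be
possible to prolong it by a further thread vertex. -/
structure IsThreadPath (G : SimpleGraph V) (U : Set V) (p : List V) : Prop where
  nodup : p.Nodup
  isChain : p.IsChain G.Adj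
  isThreadVertex : ∀ v ∈ p, IsThreadVertex G U v

namespace IsThreadPath

lemma reverse (hp : IsThreadPath G U p) : IsThreadPath G U p.reverse where
  nodup := List.nodup_reverse.mpr hp.nodup
  isChain := List.isChain_reverse.mpr <| by simpa only [G.adj_comm] using hp.isChain
  isThreadVertex v hv := hp.isThreadVertex v (List.mem_reverse.mp hv)

lemma cons (hp : IsThreadPath G U p) (hw : w ∉ p) (hwT : IsThreadVertex G U w)
    (hadj : ∀ b ∈ p.head?, G.Adj w b) : IsThreadPath G U (w :: p) where
  nodup := hp.nodup.cons hw
  isChain := List.isChain_cons.mpr ⟨hadj, hp.isChain⟩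
  isThreadVertex := List.forall_mem_cons.mpr ⟨hwT, hp.isThreadVertex⟩

lemma head?_or_getLast?_eq_some_of_adj (hp : IsThreadPath G U p) (ha : a ∈ p) (hw : w ∉ p)
    (hadj : G.Adj a w) : p.head? = some a ∨ p.getLast? = some a := by
  obtain ⟨l, r, rfl⟩ := List.append_of_mem ha
  rcases l.eq_nil_or_concat' with rfl | ⟨l, x, rfl⟩
  · exact .inl rfl
  rcases r with _ | ⟨y, r⟩
  · exact .inr List.getLast?_concat
  -- Otherwise the neighbors `x`, `y` and `w` of `a` are distinct.
  obtain ⟨hxa, hay⟩ : G.Adj x a ∧ G.Adj a y := by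
    have hchain := hp.isChain
    simp only [List.isChain_append, List.isChain_cons_cons] at hchain
    exact ⟨by simpa using hchain.2.2, hchain.2.1.1⟩
  obtain ⟨z, -, hN⟩ :=
    exists_neighborSet_eq_pair_of_deg_eq_two (hp.isThreadVertex a ha).2 hadj
  have hx : x ∈ G.neighborSet a := hxa.symm
  have hy : y ∈ G.neighborSet a := hay
  have hnodup := hp.nodup
  grind

lemma exists_isThreadPath_length_eq_succ (hp : IsThreadPath G U p) (ha : a ∈ p) (hw : w ∉ p)
    (hadj : G.Adj a w) (hwT : IsThreadVertex G U w) :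
    ∃ q, IsThreadPath G U q ∧ q.length = p.length + 1 := by
  rcases hp.head?_or_getLast?_eq_some_of_adj ha hw hadj with hhead | hlast
  · exact ⟨w :: p, hp.cons hw hwT (by simpa [hhead] using hadj.symm), rfl⟩
  · exact ⟨w :: p.reverse, hp.reverse.cons (by simpa using hw) hwT
      (by simpa [hlast] using hadj.symm), by simp⟩

lemma isThread (hp : IsThreadPath G U p) (hassign : IsAssignment I F U)
    (hU : ∀ v ∈ U, 2 ≤ deg G v) (hne : p ≠ [])
    (hmax : ∀ a ∈ p, ∀ w ∉ p, G.Adj a w → ¬ IsThreadVertex G U w) : IsThread G I F U p := by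
  refine ⟨hne, hp.nodup, hp.isChain, hp.isThreadVertex, ?_⟩
  rintro w hw ⟨a, ha, hadj⟩
  by_cases hwI : w ∈ I
  · exact .inr (.inl hwI)
  rcases hassign.mem_union_of_notMem hwI with hwF | hwU
  · exact .inr (.inr hwF)
  · exact .inl ((hU w hwU).lt_of_ne' fun hdeg ↦ hmax a ha w hw hadj ⟨hwU, hdeg⟩)

theorem exists_isThread_length_ge [Finite V] {p : List V} (hp : IsThreadPath G U p)
    (hassign : IsAssignment I F U) (hU : ∀ v ∈ U, 2 ≤ deg G v) (hne : p ≠ []) :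
    ∃ q, IsThread G I F U q ∧ p.length ≤ q.length := by
  by_cases hmax : ∀ a ∈ p, ∀ w ∉ p, G.Adj a w → ¬ IsThreadVertex G U w
  · exact ⟨p, hp.isThread hassign hU hne hmax, le_rfl⟩
  push Not at hmax
  obtain ⟨a, ha, w, hw, hadj, hwT⟩ := hmax
  obtain ⟨q, hq, hlen⟩ := hp.exists_isThreadPath_length_eq_succ ha hw hadj hwT
  obtain ⟨r, hr, hqr⟩ := hq.exists_isThread_length_ge hassign hU (by rintro rfl; simp at hlen)
  exact ⟨r, hr, by omega⟩
termination_by Nat.card V - p.length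
decreasing_by
  have := hq.nodup.length_le_natCard
  omega

end IsThreadPath

lemma IsThread.not_isThreadVertex_of_bordersThread (hp : IsThread G I F U p)
    (hassign : IsAssignment I F U) (hw : BordersThread G p w) : ¬ IsThreadVertex G U w := by
  rintro ⟨hwU, hdeg⟩
  rcases hp.2.2.2.2 w hw.1 hw.2 with h3 | hI | hF
  · omega
  · exact Set.disjoint_left.mp hassign.2.2.1 hI hwU
  · exact Set.disjoint_left.mp hassign.2.2.2 hF hwU

lemma not_isThreadVertex_of_adj_of_adj [Finite V] (hassign : IsAssignment I F U)
    (hU : ∀ v ∈ U, 2 ≤ deg G v) (hthread : ¬ ∃ p, IsThread G I F U p ∧ 3 ≤ p.length)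
    (hu : IsThreadVertex G U u) (hv : IsThreadVertex G U v) (huv : G.Adj u v) (hvw : G.Adj v w)
    (huw : u ≠ w) : ¬ IsThreadVertex G U w := fun hw ↦ by
  have hp : IsThreadPath G U [u, v, w] :=
    ⟨by simp [huv.ne, hvw.ne, huw], by simp [huv, hvw], by simp [hu, hv, hw]⟩
  exact hthread (hp.exists_isThread_length_ge hassign hU (by simp))

lemma isThread_singleton (hassign : IsAssignment I F U) (hU : ∀ v ∈ U, 2 ≤ deg G v)
    (hv : IsThreadVertex G U v) (hadj : ∀ w, G.Adj v w → ¬ IsThreadVertex G U w) :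
    IsThread G I F U [v] :=
  IsThreadPath.isThread ⟨by simp, by simp, by simpa using hv⟩ hassign hU (by simp) <| by
    simpa using fun w _ ↦ hadj w

lemma isThread_pair [Finite V] (hassign : IsAssignment I F U) (hU : ∀ v ∈ U, 2 ≤ deg G v)
    (hthread : ¬ ∃ p, IsThread G I F U p ∧ 3 ≤ p.length)
    (hu : IsThreadVertex G U u) (hv : IsThreadVertex G U v) (huv : G.Adj u v) :
    IsThread G I F U [u, v] := by
  have hpath : IsThreadPath G U [u, v] :=
    ⟨by simp [huv.ne], by simp [huv], by simp [hu, hv]⟩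
  refine hpath.isThread hassign hU (by simp) fun a ha w hw hadj ↦ ?_
  simp only [List.mem_cons, List.not_mem_nil, or_false, not_or] at ha hw
  rcases ha with rfl | rfl
  · exact not_isThreadVertex_of_adj_of_adj hassign hU hthread hv hu huv.symm hadj (Ne.symm hw.2)
  · exact not_isThreadVertex_of_adj_of_adj hassign hU hthread hu hv huv hadj (Ne.symm hw.1)

end Threads

/-! ### The discharging rules -/

section Rules

variable {V : Type*} {G : SimpleGraph V} {I F U : Set V} {n : ℕ} {u v : V}

/-- Some `n`-thread contains `v` but not `u`. For adjacent `u` and `v`, it is an `n`-thread that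
`u` borders and that the edge `uv` enters. -/
def EntersThread (G : SimpleGraph V) (I F U : Set V) (n : ℕ) (u v : V) : Prop :=
  ∃ p : List V, IsThread G I F U p ∧ p.length = n ∧ v ∈ p ∧ u ∉ p

/-- As `EntersThread`, with a thread none of whose bordering vertices is in `I`. -/
def EntersThreadOffI (G : SimpleGraph V) (I F U : Set V) (n : ℕ) (u v : V) : Prop :=
  ∃ p : List V, IsThread G I F U p ∧ p.length = n ∧ v ∈ p ∧ u ∉ p ∧
    ∀ w, BordersThread G p w → w ∈ F ∪ U

lemma EntersThreadOffI.entersThread (h : EntersThreadOffI G I F U n u v) :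
    EntersThread G I F U n u v :=
  let ⟨p, hp, hlen, hv, hu, _⟩ := h
  ⟨p, hp, hlen, hv, hu⟩

lemma EntersThread.isThreadVertex (h : EntersThread G I F U n u v) : IsThreadVertex G U v :=
  let ⟨_, hp, _, hv, _⟩ := h
  hp.2.2.2.1 v hv

lemma EntersThread.not_isThreadVertex_of_adj (h : EntersThread G I F U n u v)
    (hassign : IsAssignment I F U) (hadj : G.Adj u v) : ¬ IsThreadVertex G U u :=
  let ⟨_, hp, _, hv, hu⟩ := h
  hp.not_isThreadVertex_of_bordersThread hassign ⟨hu, v, hv, hadj.symm⟩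

open Classical in
/-- The charge that `u` sends to its neighbor `v`. -/
noncomputable def transfer (G : SimpleGraph V) (I F U : Set V) (u v : V) : ℚ :=
  if u ∈ I ∨ EntersThread G I F U 2 u v then 1
  else if EntersThreadOffI G I F U 1 u v then 1 / 2
  else 0

lemma transfer_nonneg (G : SimpleGraph V) (I F U : Set V) (u v : V) :
    0 ≤ transfer G I F U u v := by
  unfold transfer
  split_ifs <;> norm_num

lemma transfer_le_one (G : SimpleGraph V) (I F U : Set V) (u v : V) :
    transfer G I F U u v ≤ 1 := by
  unfold transfer
  split_ifs <;> norm_num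

lemma transfer_eq_one_of_mem (hu : u ∈ I) : transfer G I F U u v = 1 :=
  if_pos (.inl hu)

lemma transfer_eq_one_of_entersThread (h : EntersThread G I F U 2 u v) :
    transfer G I F U u v = 1 :=
  if_pos (.inr h)

lemma half_le_transfer_of_entersThreadOffI (h : EntersThreadOffI G I F U 1 u v) :
    1 / 2 ≤ transfer G I F U u v := by
  unfold transfer
  split_ifs <;> norm_num

lemma transfer_le_half (hu : u ∉ I) (h : ¬ EntersThread G I F U 2 u v) :
    transfer G I F U u v ≤ 1 / 2 := by
  unfold transfer
  split_ifs <;> first | tauto | norm_num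

lemma transfer_eq_zero (hu : u ∉ I) (h : ¬ EntersThread G I F U 2 u v)
    (h' : ¬ EntersThreadOffI G I F U 1 u v) : transfer G I F U u v = 0 := by
  simp [transfer, hu, h, h']

lemma transfer_eq_zero_of_not_isThreadVertex (hu : u ∉ I) (hv : ¬ IsThreadVertex G U v) :
    transfer G I F U u v = 0 :=
  transfer_eq_zero hu (fun h ↦ hv h.isThreadVertex) fun h ↦ hv h.entersThread.isThreadVertex

lemma transfer_eq_zero_of_isThreadVertex (hassign : IsAssignment I F U)
    (hu : IsThreadVertex G U u) (hadj : G.Adj u v) : transfer G I F U u v = 0 :=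
  transfer_eq_zero (fun huI ↦ Set.disjoint_left.mp hassign.2.2.1 huI hu.1)
    (fun h ↦ h.not_isThreadVertex_of_adj hassign hadj hu)
    fun h ↦ h.entersThread.not_isThreadVertex_of_adj hassign hadj hu

end Rules

section Charges

variable {V : Type*} {G : SimpleGraph V} {I F U : Set V} {u v a b : V}

/-- The contribution of `v` to the potential: `1`, `4` or `5` as `v` is in `I`, `F` or `U`. -/
noncomputable def weight (I F U : Set V) (v : V) : ℚ :=
  I.indicator 1 v + 4 * F.indicator 1 v + 5 * U.indicator 1 v

lemma weight_of_mem_I (hassign : IsAssignment I F U) (hv : v ∈ I) : weight I F U v = 1 := by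
  simp [weight, hv, Set.disjoint_left.mp hassign.2.1 hv, Set.disjoint_left.mp hassign.2.2.1 hv]

lemma weight_of_mem_F (hassign : IsAssignment I F U) (hv : v ∈ F) : weight I F U v = 4 := by
  simp [weight, hv, Set.disjoint_right.mp hassign.2.1 hv, Set.disjoint_left.mp hassign.2.2.2 hv]

lemma weight_of_mem_U (hassign : IsAssignment I F U) (hv : v ∈ U) : weight I F U v = 5 := by
  simp [weight, hv, Set.disjoint_right.mp hassign.2.2.1 hv,
    Set.disjoint_right.mp hassign.2.2.2 hv]

lemma weight_le_five (hassign : IsAssignment I F U) (v : V) : weight I F U v ≤ 5 := by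
  by_cases hI : v ∈ I
  · norm_num [weight_of_mem_I hassign hI]
  rcases hassign.mem_union_of_notMem hI with hF | hU
  · norm_num [weight_of_mem_F hassign hF]
  · norm_num [weight_of_mem_U hassign hU]

lemma sum_weight [Fintype V] (I F U : Set V) :
    ∑ v, weight I F U v = I.ncard + 4 * F.ncard + 5 * U.ncard := by
  simp only [weight, Finset.sum_add_distrib, ← Finset.mul_sum, sum_indicator_one_eq_ncard]

variable [G.LocallyFinite]

/-- The total charge that `v` receives from its neighbors. -/
noncomputable def received (G : SimpleGraph V) [G.LocallyFinite] (I F U : Set V) (v : V) : ℚ :=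
  ∑ u ∈ G.neighborFinset v, transfer G I F U u v

/-- The total charge that `v` sends to its neighbors. -/
noncomputable def sent (G : SimpleGraph V) [G.LocallyFinite] (I F U : Set V) (v : V) : ℚ :=
  ∑ u ∈ G.neighborFinset v, transfer G I F U v u

/-- The charge of `v` after all transfers, its initial charge being
`2 * deg G v - weight I F U v`. -/
noncomputable def finalCharge (G : SimpleGraph V) [G.LocallyFinite] (I F U : Set V) (v : V) : ℚ :=
  2 * deg G v - weight I F U v + received G I F U v - sent G I F U v

theorem sum_finalCharge [Fintype V] (G : SimpleGraph V) [G.LocallyFinite] (I F U : Set V) :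
    ∑ v, finalCharge G I F U v =
      4 * edgeCount G - (I.ncard + 4 * F.ncard + 5 * U.ncard) := by
  have hcancel : ∑ v, received G I F U v = ∑ v, sent G I F U v :=
    sum_sum_neighborFinset_comm (transfer G I F U)
  have hdeg : ∑ v, (deg G v : ℚ) = 2 * edgeCount G := mod_cast sum_deg_eq_two_mul_edgeCount G
  simp only [finalCharge, Finset.sum_sub_distrib, Finset.sum_add_distrib, ← Finset.mul_sum,
    hcancel, hdeg, sum_weight]
  ring

lemma received_nonneg (G : SimpleGraph V) [G.LocallyFinite] (I F U : Set V) (v : V) :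
    0 ≤ received G I F U v :=
  Finset.sum_nonneg fun u _ ↦ transfer_nonneg G I F U u v

lemma transfer_le_received (hadj : G.Adj v u) : transfer G I F U u v ≤ received G I F U v :=
  Finset.single_le_sum (f := fun u ↦ transfer G I F U u v)
    (fun u _ ↦ transfer_nonneg G I F U u v) ((G.mem_neighborFinset v u).mpr hadj)

lemma one_le_received_of_adj_mem (hadj : G.Adj v u) (hu : u ∈ I) : 1 ≤ received G I F U v :=
  (transfer_eq_one_of_mem hu).symm.trans_le (transfer_le_received hadj)

lemma sent_le_deg_mul {k : ℚ} (hk : ∀ u, G.Adj v u → transfer G I F U v u ≤ k) :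
    sent G I F U v ≤ deg G v * k := by
  rw [← card_neighborFinset_eq_deg, ← nsmul_eq_mul]
  exact Finset.sum_le_card_nsmul _ _ _ (by simpa using hk)

lemma sent_le_deg (G : SimpleGraph V) [G.LocallyFinite] (I F U : Set V) (v : V) :
    sent G I F U v ≤ deg G v := by
  simpa using sent_le_deg_mul fun u _ ↦ transfer_le_one G I F U v u

lemma sent_le_transfer_add {k : ℚ} (ha : G.Adj v a)
    (hk : ∀ u, G.Adj v u → u ≠ a → transfer G I F U v u ≤ k) :
    sent G I F U v ≤ transfer G I F U v a + (deg G v - 1) * k := by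
  simpa [sent, deg_eq_degree] using sum_le_sum_add_card_sub_card_mul
    (s := G.neighborFinset v) (t := {a}) (by simpa using ha) (by simpa using hk)

lemma sent_le_transfer_add_transfer_add (ha : G.Adj v a) (hb : G.Adj v b) (hab : a ≠ b) :
    sent G I F U v ≤ transfer G I F U v a + transfer G I F U v b + (deg G v - 2) := by
  classical
  simpa [sent, deg_eq_degree, Finset.sum_pair hab, Finset.card_pair hab] using
    sum_le_sum_add_card_sub_card_mul (s := G.neighborFinset v) (t := {a, b})
      (by simp [Finset.insert_subset_iff, ha, hb]) fun u _ _ ↦ transfer_le_one G I F U v u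

/-! ### Final charges -/

lemma finalCharge_nonneg_of_mem_I (hassign : IsAssignment I F U) (hv : v ∈ I)
    (hdeg : 1 ≤ deg G v) : 0 ≤ finalCharge G I F U v := by
  have hdeg' : (1 : ℚ) ≤ deg G v := mod_cast hdeg
  rw [finalCharge, weight_of_mem_I hassign hv]
  linarith [received_nonneg G I F U v, sent_le_deg G I F U v]

lemma finalCharge_nonneg_of_weight_le_deg (h : weight I F U v ≤ deg G v) :
    0 ≤ finalCharge G I F U v := by
  rw [finalCharge]
  linarith [received_nonneg G I F U v, sent_le_deg G I F U v]

lemma finalCharge_nonneg_of_adj_mem (hassign : IsAssignment I F U) (hv : v ∉ I) (hu : u ∈ I)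
    (hadj : G.Adj v u) (hdeg : 3 ≤ deg G v) : 0 ≤ finalCharge G I F U v := by
  have hdeg' : (3 : ℚ) ≤ deg G v := mod_cast hdeg
  have hzero : transfer G I F U v u = 0 := transfer_eq_zero_of_not_isThreadVertex hv
    fun h ↦ Set.disjoint_left.mp hassign.2.2.1 hu h.1
  have hsent := sent_le_transfer_add hadj fun w _ _ ↦ transfer_le_one G I F U v w
  rw [finalCharge]
  linarith [one_le_received_of_adj_mem (F := F) (U := U) hadj hu, weight_le_five hassign v]

lemma finalCharge_nonneg_of_mem_F_of_deg_eq_three (hassign : IsAssignment I F U) (hv : v ∈ F)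
    (hdeg : deg G v = 3) (h2 : ∀ u, G.Adj v u → ¬ EntersThread G I F U 2 v u) :
    0 ≤ finalCharge G I F U v := by
  have hvI : v ∉ I := Set.disjoint_right.mp hassign.2.1 hv
  have hsent := sent_le_deg_mul fun u hu ↦ transfer_le_half hvI (h2 u hu)
  rw [hdeg] at hsent
  rw [finalCharge, weight_of_mem_F hassign hv, hdeg]
  norm_num at hsent ⊢
  linarith [received_nonneg G I F U v]

lemma finalCharge_nonneg_of_mem_U_of_deg_eq_three (hassign : IsAssignment I F U) (hv : v ∈ U)
    (hdeg : deg G v = 3) (h2 : ∀ u, G.Adj v u → ¬ EntersThread G I F U 2 v u)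
    (h1 : ¬ ∀ u, G.Adj v u → EntersThreadOffI G I F U 1 v u) :
    0 ≤ finalCharge G I F U v := by
  have hvI : v ∉ I := Set.disjoint_right.mp hassign.2.2.1 hv
  push Not at h1
  obtain ⟨a, ha, ha1⟩ := h1
  have hzero : transfer G I F U v a = 0 := transfer_eq_zero hvI (h2 a ha) ha1
  have hsent := sent_le_transfer_add ha fun u hu _ ↦ transfer_le_half hvI (h2 u hu)
  rw [hdeg] at hsent
  rw [finalCharge, weight_of_mem_U hassign hv, hdeg]
  norm_num at hsent ⊢
  linarith [received_nonneg G I F U v]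

lemma finalCharge_nonneg_of_mem_U_of_deg_eq_four (hassign : IsAssignment I F U) (hv : v ∈ U)
    (hdeg : deg G v = 4) (h2 : ¬ ∀ u, G.Adj v u → EntersThread G I F U 2 v u)
    (h21 : ¬ ∃ a, G.Adj v a ∧ EntersThreadOffI G I F U 1 v a ∧
      ∀ u, G.Adj v u → u ≠ a → EntersThread G I F U 2 v u) :
    0 ≤ finalCharge G I F U v := by
  have hvI : v ∉ I := Set.disjoint_right.mp hassign.2.2.1 hv
  suffices hsent : sent G I F U v ≤ 3 by
    rw [finalCharge, weight_of_mem_U hassign hv, hdeg]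
    push_cast
    linarith [received_nonneg G I F U v]
  push Not at h2 h21
  obtain ⟨a, ha, ha2⟩ := h2
  by_cases ha1 : EntersThreadOffI G I F U 1 v a
  · obtain ⟨b, hb, hba, hb2⟩ := h21 a ha ha1
    have hsent := sent_le_transfer_add_transfer_add (I := I) (F := F) (U := U) ha hb hba.symm
    rw [hdeg] at hsent
    push_cast at hsent
    linarith [transfer_le_half hvI ha2, transfer_le_half hvI hb2]
  · have hsent := sent_le_transfer_add ha fun u _ _ ↦ transfer_le_one G I F U v u
    rw [transfer_eq_zero hvI ha2 ha1, hdeg] at hsent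
    norm_num at hsent
    exact hsent

lemma one_le_received_of_adj_isThreadVertex [Finite V] (hassign : IsAssignment I F U)
    (hU : ∀ v ∈ U, 2 ≤ deg G v) (hthread : ¬ ∃ p, IsThread G I F U p ∧ 3 ≤ p.length)
    (hv : IsThreadVertex G U v) (hu : IsThreadVertex G U u) (hadj : G.Adj v u) :
    1 ≤ received G I F U v := by
  obtain ⟨y, huy, hN⟩ := exists_neighborSet_eq_pair_of_deg_eq_two hv.2 hadj
  have hy : G.Adj v y := by
    rw [← mem_neighborSet, hN]
    exact .inr rfl
  have henters : EntersThread G I F U 2 y v :=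
    ⟨[v, u], isThread_pair hassign hU hthread hv hu hadj, rfl, by simp,
      by simp [hy.ne', huy.symm]⟩
  exact (transfer_eq_one_of_entersThread henters).symm.trans_le (transfer_le_received hy)

lemma one_le_received_of_forall_adj (hassign : IsAssignment I F U)
    (hU : ∀ v ∈ U, 2 ≤ deg G v) (hv : IsThreadVertex G U v)
    (hI : ∀ u, G.Adj v u → u ∉ I) (hT : ∀ u, G.Adj v u → ¬ IsThreadVertex G U u) :
    1 ≤ received G I F U v := by
  have henters : ∀ u, G.Adj v u → EntersThreadOffI G I F U 1 u v := fun u hadj ↦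
    ⟨[v], isThread_singleton hassign hU hv hT, rfl, by simp, by simp [hadj.ne'], fun w hw ↦
      hassign.mem_union_of_notMem (hI w (by simpa using hw.2))⟩
  calc (1 : ℚ) = (G.neighborFinset v).card • (1 / 2 : ℚ) := by
        rw [card_neighborFinset_eq_deg, hv.2]
        norm_num
    _ ≤ received G I F U v := Finset.card_nsmul_le_sum _ _ _ fun u hu ↦
        half_le_transfer_of_entersThreadOffI (henters u ((G.mem_neighborFinset v u).mp hu))

lemma one_le_received_of_isThreadVertex [Finite V] (hassign : IsAssignment I F U)
    (hU : ∀ v ∈ U, 2 ≤ deg G v) (hthread : ¬ ∃ p, IsThread G I F U p ∧ 3 ≤ p.length)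
    (hv : IsThreadVertex G U v) : 1 ≤ received G I F U v := by
  by_cases hI : ∃ u, G.Adj v u ∧ u ∈ I
  · obtain ⟨u, hadj, hu⟩ := hI
    exact one_le_received_of_adj_mem hadj hu
  by_cases hT : ∃ u, G.Adj v u ∧ IsThreadVertex G U u
  · obtain ⟨u, hadj, hu⟩ := hT
    exact one_le_received_of_adj_isThreadVertex hassign hU hthread hv hu hadj
  push Not at hI hT
  exact one_le_received_of_forall_adj hassign hU hv hI hT

lemma finalCharge_nonneg_of_isThreadVertex [Finite V] (hassign : IsAssignment I F U)
    (hU : ∀ v ∈ U, 2 ≤ deg G v) (hthread : ¬ ∃ p, IsThread G I F U p ∧ 3 ≤ p.length)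
    (hv : IsThreadVertex G U v) : 0 ≤ finalCharge G I F U v := by
  have hsent : sent G I F U v = 0 := Finset.sum_eq_zero fun u hu ↦
    transfer_eq_zero_of_isThreadVertex hassign hv ((G.mem_neighborFinset v u).mp hu)
  rw [finalCharge, weight_of_mem_U hassign hv.1, hsent, hv.2]
  push_cast
  linarith [one_le_received_of_isThreadVertex hassign hU hthread hv]

lemma finalCharge_nonneg_of_mem_F (hassign : IsAssignment I F U) (hv : v ∈ F)
    (hdeg : 3 ≤ deg G v)
    (h3 : deg G v = 3 → (∀ u, G.Adj v u → u ∉ I) →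
      ∀ u, G.Adj v u → ¬ EntersThread G I F U 2 v u) :
    0 ≤ finalCharge G I F U v := by
  rcases hdeg.eq_or_lt' with hdeg3 | hdeg4
  · by_cases hadjI : ∃ u, G.Adj v u ∧ u ∈ I
    · obtain ⟨u, hadj, hu⟩ := hadjI
      exact finalCharge_nonneg_of_adj_mem hassign (Set.disjoint_right.mp hassign.2.1 hv) hu hadj
        hdeg
    push Not at hadjI
    exact finalCharge_nonneg_of_mem_F_of_deg_eq_three hassign hv hdeg3 (h3 hdeg3 hadjI)
  · refine finalCharge_nonneg_of_weight_le_deg ?_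
    rw [weight_of_mem_F hassign hv]
    exact_mod_cast hdeg4

lemma finalCharge_nonneg_of_mem_U [Finite V] (hassign : IsAssignment I F U)
    (hU : ∀ v ∈ U, 2 ≤ deg G v) (hthread : ¬ ∃ p, IsThread G I F U p ∧ 3 ≤ p.length) (hv : v ∈ U)
    (h3 : deg G v = 3 → (∀ u, G.Adj v u → u ∉ I) →
      ∀ u, G.Adj v u → ¬ EntersThread G I F U 2 v u)
    (h3' : deg G v = 3 → ¬ ∀ u, G.Adj v u → EntersThreadOffI G I F U 1 v u)
    (h4 : deg G v = 4 → ¬ ∀ u, G.Adj v u → EntersThread G I F U 2 v u)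
    (h4' : deg G v = 4 → ¬ ∃ a, G.Adj v a ∧ EntersThreadOffI G I F U 1 v a ∧
      ∀ u, G.Adj v u → u ≠ a → EntersThread G I F U 2 v u) :
    0 ≤ finalCharge G I F U v := by
  obtain hdeg | hdeg | hdeg | hdeg :
      deg G v = 2 ∨ deg G v = 3 ∨ deg G v = 4 ∨ 5 ≤ deg G v := by
    have := hU v hv
    omega
  · exact finalCharge_nonneg_of_isThreadVertex hassign hU hthread ⟨hv, hdeg⟩
  · by_cases hadjI : ∃ u, G.Adj v u ∧ u ∈ I
    · obtain ⟨u, hadj, hu⟩ := hadjI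
      exact finalCharge_nonneg_of_adj_mem hassign (Set.disjoint_right.mp hassign.2.2.1 hv) hu hadj
        hdeg.ge
    push Not at hadjI
    exact finalCharge_nonneg_of_mem_U_of_deg_eq_three hassign hv hdeg (h3 hdeg hadjI) (h3' hdeg)
  · exact finalCharge_nonneg_of_mem_U_of_deg_eq_four hassign hv hdeg (h4 hdeg) (h4' hdeg)
  · refine finalCharge_nonneg_of_weight_le_deg ?_
    rw [weight_of_mem_U hassign hv]
    exact_mod_cast hdeg

end Charges

/-- Lemma 4.1 (discharging): if an assigned graph `G` satisfies all the structural
conditions (minimum degrees on `I`, `U`, `F`; no `3⁺`-thread; no 4-vertex in `U` incident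
to four 2-threads; no 3-vertex in `F ∪ U` without a neighbor in `I` incident to a 2-thread;
no 3-vertex in `U` incident to three 1-threads bordered in `F ∪ U`; and no 4-vertex in `U`
incident to three 2-threads and a 1-thread whose other border lies in `F ∪ U`), then
`ρ_G(G) ≤ 0`, i.e. `|I| + 4|F| + 5|U| ≤ 4|E(G)|`. -/
theorem discharging {V : Type*} [Fintype V] (G : SimpleGraph V)
    (I F U : Set V) (hassign : IsAssignment I F U)
    (hI : ∀ v ∈ I, 1 ≤ deg G v)
    (hU : ∀ v ∈ U, 2 ≤ deg G v)
    (hF : ∀ v ∈ F, 3 ≤ deg G v)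
    (hthread : ¬ ∃ p : List V, IsThread G I F U p ∧ 3 ≤ p.length)
    (h4v : ¬ ∃ v ∈ U, deg G v = 4 ∧
      ∀ u, G.Adj v u → ∃ p : List V, IsThread G I F U p ∧ p.length = 2 ∧ u ∈ p ∧ v ∉ p)
    (h3v2t : ¬ ∃ v ∈ F ∪ U, deg G v = 3 ∧ (∀ u, G.Adj v u → u ∉ I) ∧
      ∃ p : List V, IsThread G I F U p ∧ p.length = 2 ∧ BordersThread G p v)
    (h3v1t : ¬ ∃ v ∈ U, deg G v = 3 ∧
      ∀ u, G.Adj v u → ∃ p : List V, IsThread G I F U p ∧ p.length = 1 ∧ u ∈ p ∧ v ∉ p ∧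
        ∀ w, BordersThread G p w → w ∈ F ∪ U)
    (h4v21 : ¬ ∃ v ∈ U, deg G v = 4 ∧
      ∃ a, G.Adj v a ∧
        (∃ p : List V, IsThread G I F U p ∧ p.length = 1 ∧ a ∈ p ∧ v ∉ p ∧
          ∀ w, BordersThread G p w → w ≠ v → w ∈ F ∪ U) ∧
        ∀ u, G.Adj v u → u ≠ a →
          ∃ p : List V, IsThread G I F U p ∧ p.length = 2 ∧ u ∈ p ∧ v ∉ p) :
    I.ncard + 4 * F.ncard + 5 * U.ncard ≤ 4 * edgeCount G := by
  classical
  have h2 (v : V) (hv : v ∈ F ∪ U) (hdeg : deg G v = 3) (hvI : ∀ u, G.Adj v u → u ∉ I) :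
      ∀ u, G.Adj v u → ¬ EntersThread G I F U 2 v u := fun u hadj ⟨p, hp, hlen, hu, hvp⟩ ↦
    h3v2t ⟨v, hv, hdeg, hvI, p, hp, hlen, hvp, u, hu, hadj.symm⟩
  have hfinal : ∀ v, 0 ≤ finalCharge G I F U v := by
    intro v
    by_cases hvI : v ∈ I
    · exact finalCharge_nonneg_of_mem_I hassign hvI (hI v hvI)
    rcases hassign.mem_union_of_notMem hvI with hvF | hvU
    · exact finalCharge_nonneg_of_mem_F hassign hvF (hF v hvF) (h2 v (.inl hvF))
    · refine finalCharge_nonneg_of_mem_U hassign hU hthread hvU (h2 v (.inr hvU))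
        (fun hdeg h ↦ h3v1t ⟨v, hvU, hdeg, h⟩) (fun hdeg h ↦ h4v ⟨v, hvU, hdeg, h⟩) ?_
      rintro hdeg ⟨a, ha, ⟨p, hp, hlen, hap, hvp, hborder⟩, h⟩
      exact h4v21 ⟨v, hvU, hdeg, a, ha, ⟨p, hp, hlen, hap, hvp, fun w hw _ ↦ hborder w hw⟩, h⟩
  have hsum : 0 ≤ ∑ v, finalCharge G I F U v := Finset.sum_nonneg fun v _ ↦ hfinal v
  rw [sum_finalCharge, sub_nonneg] at hsum
  exact_mod_cast hsum
end
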